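/- Let b and ℬ be powers of 2 with b ≤ ℬ and ℬ ≥ 2, and let n₁ < n₂ < … < n_ν be strictly increasing positive integers. Let M := Σ_{i=0}^{n_ν} m_i ℬ^i, where m_i = ℬ − b if i = n_j for some j ∈ {1, …, ν}, and m_i = ℬ − 1 otherwise. Then for every integer g ≥ 0, the following are equivalent: (i) g < ℬ^{n_ν + 1} and τ(g, M) = 0; (ii) there exist z₁, …, z_ν ∈ [0, b) such that g = Σ_{i=1}^ν z_i ℬ^{n_i}. -/

import Mathlib

/-- `σ(a)`: the sum of the binary digits of `a`. -/
def binDigitSum (a : ℕ) : ℕ := (Nat.digits 2 a).sum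

/-- `τ(a, b) = σ(a) + σ(b) − σ(a+b)`: the number of carries in the base-2
addition of `a` and `b`. -/
def carries (a b : ℕ) : ℤ :=
  (binDigitSum a : ℤ) + (binDigitSum b : ℤ) - (binDigitSum (a + b) : ℤ)

theorem bds_rec (a : ℕ) : binDigitSum a = a % 2 + binDigitSum (a / 2) := by
  rcases Nat.eq_zero_or_pos a with rfl | h
  · simp [binDigitSum]
  · unfold binDigitSum
    rw [Nat.digits_def' (by norm_num) h]
    simp

theorem bds_add (N : ℕ) : ∀ a b : ℕ, a + b ≤ N →
    binDigitSum (a + b) ≤ binDigitSum a + binDigitSum b := by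
  induction N using Nat.strong_induction_on with
  | _ N ih =>
    intro a b h
    rcases Nat.eq_zero_or_pos a with rfl | ha
    · simp [binDigitSum]
    rcases Nat.eq_zero_or_pos b with rfl | hb
    · simp [binDigitSum]
    rcases (by omega : (a = 1 ∧ b = 1) ∨ 2 < a + b) with ⟨rfl, rfl⟩ | h2
    · simp [binDigitSum]
    have e1 := bds_rec a
    have e2 := bds_rec b
    have e3 := bds_rec (a + b)
    have one : binDigitSum 1 = 1 := by simp [binDigitSum]
    have i1 := ih (a / 2 + b / 2) (by omega) (a / 2) (b / 2) le_rfl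
    by_cases hc : a % 2 = 1 ∧ b % 2 = 1
    · have i2 := ih (a / 2 + b / 2 + 1) (by omega) (a / 2 + b / 2) 1 le_rfl
      have : (a + b) / 2 = a / 2 + b / 2 + 1 := by omega
      rw [this] at e3
      omega
    · have : (a + b) / 2 = a / 2 + b / 2 := by omega
      rw [this] at e3
      omega

theorem land_split (k x y u v : ℕ) (hx : x < 2 ^ k) (hy : y < 2 ^ k) :
    (2 ^ k * u + x) &&& (2 ^ k * v + y) = 0 ↔ x &&& y = 0 ∧ u &&& v = 0 := by
  have key : (2 ^ k * u + x) &&& (2 ^ k * v + y) = 2 ^ k * (u &&& v) + (x &&& y) := by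
    apply Nat.eq_of_testBit_eq
    intro i
    have hxy : x &&& y < 2 ^ k := lt_of_le_of_lt Nat.and_le_left hx
    rw [Nat.testBit_and, Nat.testBit_two_pow_mul_add _ hx, Nat.testBit_two_pow_mul_add _ hy,
      Nat.testBit_two_pow_mul_add _ hxy]
    split_ifs <;> simp
  rw [key]
  simp [and_comm]

theorem bds_eq_iff (N : ℕ) : ∀ a b : ℕ, a + b ≤ N →
    (binDigitSum a + binDigitSum b = binDigitSum (a + b) ↔ a &&& b = 0) := by
  induction N using Nat.strong_induction_on with
  | _ N ih =>
    intro a b h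
    rcases Nat.eq_zero_or_pos a with rfl | ha
    · simp [binDigitSum]
    rcases Nat.eq_zero_or_pos b with rfl | hb
    · simp [binDigitSum]
    have e1 := bds_rec a
    have e2 := bds_rec b
    have e3 := bds_rec (a + b)
    have one : binDigitSum 1 = 1 := by simp [binDigitSum]
    have i1 := ih (a / 2 + b / 2) (by omega) (a / 2) (b / 2) le_rfl
    have sp := land_split 1 (a % 2) (b % 2) (a / 2) (b / 2) (by omega) (by omega)
    rw [pow_one, Nat.div_add_mod, Nat.div_add_mod] at sp
    rw [sp, ← i1]
    by_cases hc : a % 2 = 1 ∧ b % 2 = 1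
    · have i2 := bds_add _ (a / 2 + b / 2) 1 le_rfl
      have i3 := bds_add _ (a / 2) (b / 2) le_rfl
      have : (a + b) / 2 = a / 2 + b / 2 + 1 := by omega
      rw [this] at e3
      simp only [hc.1, hc.2]
      constructor
      · intro; omega
      · rintro ⟨h, -⟩
        simp at h
    · have : (a + b) / 2 = a / 2 + b / 2 := by omega
      rw [this] at e3
      have h0 : a % 2 &&& b % 2 = 0 := by
        rcases Nat.mod_two_eq_zero_or_one a with h | h
        · simp [h]
        · have : b % 2 = 0 := by omega
          simp [this]
      simp only [h0, true_and]
      omega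

theorem carries_iff (a b : ℕ) : carries a b = 0 ↔ a &&& b = 0 := by
  rw [← bds_eq_iff _ a b le_rfl]
  unfold carries
  omega

theorem digit_iff (k K d : ℕ) (hk : k ≤ K) (hd : d < 2 ^ K) :
    d &&& (2 ^ K - 2 ^ k) = 0 ↔ d < 2 ^ k := by
  obtain ⟨l, rfl⟩ := Nat.exists_eq_add_of_le hk
  have hp : 0 < 2 ^ k := by positivity
  have sp := land_split k (d % 2 ^ k) 0 (d / 2 ^ k) (2 ^ l - 1) (Nat.mod_lt _ hp) hp
  rw [Nat.div_add_mod, Nat.and_two_pow_sub_one_eq_mod] at sp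
  have e : 2 ^ (k + l) - 2 ^ k = 2 ^ k * (2 ^ l - 1) + 0 := by
    rw [pow_add, Nat.mul_sub]; simp
  have hlt : d / 2 ^ k < 2 ^ l := by
    apply Nat.div_lt_of_lt_mul
    rwa [← pow_add]
  rw [e, sp, Nat.mod_eq_of_lt hlt]
  simp [Nat.div_eq_zero_iff]

theorem sum_lt (B : ℕ) (z : ℕ → ℕ) (hz : ∀ i, z i < B) (N : ℕ) :
    ∑ i ∈ Finset.range N, z i * B ^ i < B ^ N := by
  induction N with
  | zero => simp
  | succ N ih =>
    rw [Finset.sum_range_succ, pow_succ]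
    have := Nat.mul_le_mul_right (B ^ N) (hz N)
    rw [Nat.succ_mul] at this
    rw [mul_comm (B ^ N)]
    omega

theorem mask_aux (K : ℕ) (c : ℕ → ℕ) (hc : ∀ i, c i ≤ K) (N : ℕ) : ∀ g : ℕ,
    (g < (2 ^ K) ^ N ∧ g &&& (∑ i ∈ Finset.range N, (2 ^ K - 2 ^ c i) * (2 ^ K) ^ i) = 0) ↔
      ∃ z : ℕ → ℕ, (∀ i, z i < 2 ^ c i) ∧ g = ∑ i ∈ Finset.range N, z i * (2 ^ K) ^ i := by
  have hle : ∀ i, 2 ^ c i ≤ 2 ^ K := fun i => Nat.pow_le_pow_right (by norm_num) (hc i)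
  induction N with
  | zero =>
    intro g
    simp only [pow_zero, Finset.range_zero, Finset.sum_empty]
    constructor
    · rintro ⟨h, -⟩
      exact ⟨fun _ => 0, fun i => by positivity, by omega⟩
    · rintro ⟨z, -, rfl⟩
      simp
  | succ N ih =>
    intro g
    have hp : 0 < (2 ^ K) ^ N := by positivity
    have hm := sum_lt (2 ^ K) (fun i => 2 ^ K - 2 ^ c i) (fun i => by
      have : 0 < 2 ^ c i := by positivity
      have := hle i
      show 2 ^ K - 2 ^ c i < 2 ^ K
      omega) N
    simp only [Finset.sum_range_succ]
    set S := ∑ i ∈ Finset.range N, (2 ^ K - 2 ^ c i) * (2 ^ K) ^ i with hS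
    have sp : ∀ x u, x < (2 ^ K) ^ N → (((2 ^ K) ^ N * u + x) &&&
        (S + (2 ^ K - 2 ^ c N) * (2 ^ K) ^ N) = 0 ↔ x &&& S = 0 ∧ u &&& (2 ^ K - 2 ^ c N) = 0) := by
      intro x u hx
      have := land_split (K * N) x S u (2 ^ K - 2 ^ c N) (by rwa [pow_mul]) (by rwa [pow_mul])
      rw [pow_mul] at this
      rw [← this, add_comm S, mul_comm (2 ^ K - 2 ^ c N)]
    constructor
    · rintro ⟨h1, h2⟩
      rw [← Nat.div_add_mod g ((2 ^ K) ^ N), sp _ _ (Nat.mod_lt _ hp)] at h2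
      have hd : g / (2 ^ K) ^ N < 2 ^ K := by
        apply Nat.div_lt_of_lt_mul
        rwa [← pow_succ]
      rw [digit_iff _ _ _ (hc N) hd] at h2
      obtain ⟨z, hz, hs⟩ := (ih (g % (2 ^ K) ^ N)).1 ⟨Nat.mod_lt _ hp, h2.1⟩
      refine ⟨fun i => if i = N then g / (2 ^ K) ^ N else z i, ?_, ?_⟩
      · intro i
        dsimp only
        split_ifs with h
        · rw [h]; exact h2.2
        · exact hz i
      · have : ∑ i ∈ Finset.range N, (if i = N then g / (2 ^ K) ^ N else z i) * (2 ^ K) ^ i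
            = ∑ i ∈ Finset.range N, z i * (2 ^ K) ^ i := by
          apply Finset.sum_congr rfl
          intro i hi
          rw [if_neg (Finset.mem_range.1 hi).ne]
        rw [this, ← hs]
        simp only [if_true]
        rw [mul_comm, Nat.mod_add_div]
    · rintro ⟨z, hz, rfl⟩
      have hzl : ∀ i, z i < 2 ^ K := fun i => (hz i).trans_le (hle i)
      have h1 := sum_lt (2 ^ K) z hzl
      refine ⟨?_, ?_⟩
      · rw [← Finset.sum_range_succ (fun i => z i * (2 ^ K) ^ i)]
        exact h1 (N + 1)
      · rw [add_comm (∑ i ∈ Finset.range N, z i * (2 ^ K) ^ i), mul_comm (z N), sp _ _ (h1 N)]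
        exact ⟨((ih _).2 ⟨z, hz, rfl⟩).2, (digit_iff _ _ _ (hc N) (hzl N)).2 (hz N)⟩

/-- **Masking.** Let `b, B` be powers of 2 with `b ≤ B`, `B ≥ 2`, and let
`n 0 < n 1 < … < n ν` be strictly increasing positive integers.  With the mask
`M := ∑_{i=0}^{n ν} m_i B^i` where `m_i = B − b` if `i = n j` for some `j` and
`m_i = B − 1` otherwise, a number `g ≥ 0` satisfies `g < B^(n ν + 1)` and
`τ(g, M) = 0` if and only if `g = ∑ j, z j * B^(n j)` for some digits
`z j ∈ [0, b)`. -/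
theorem masking (b B : ℕ) (hb : ∃ k : ℕ, b = 2 ^ k) (hB : ∃ k : ℕ, B = 2 ^ k)
    (hbB : b ≤ B) (hB2 : 2 ≤ B)
    (ν : ℕ) (n : Fin (ν + 1) → ℕ) (hmono : StrictMono n) (hpos : ∀ j, 0 < n j)
    (M : ℕ)
    (hM : M = ∑ i ∈ Finset.range (n (Fin.last ν) + 1),
      (if ∃ j, n j = i then B - b else B - 1) * B ^ i)
    (g : ℕ) :
    (g < B ^ (n (Fin.last ν) + 1) ∧ carries g M = 0) ↔
      ∃ z : Fin (ν + 1) → ℕ, (∀ j, z j < b) ∧ g = ∑ j, z j * B ^ (n j) := by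
  classical
  obtain ⟨k, rfl⟩ := hb
  obtain ⟨K, rfl⟩ := hB
  have hkK : k ≤ K := (Nat.pow_le_pow_iff_right (by norm_num)).1 hbB
  have aux := mask_aux K (fun i => if ∃ j, n j = i then k else 0)
    (fun i => by split_ifs <;> omega) (n (Fin.last ν) + 1) g
  have hM' : M = ∑ i ∈ Finset.range (n (Fin.last ν) + 1),
      (2 ^ K - 2 ^ (if ∃ j, n j = i then k else 0)) * (2 ^ K) ^ i := by
    rw [hM]
    apply Finset.sum_congr rfl
    intro i _
    split_ifs <;> simp
  rw [carries_iff, hM', aux]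
  have hsum : ∀ z : ℕ → ℕ, (∀ i, (¬ ∃ j, n j = i) → z i = 0) →
      ∑ i ∈ Finset.range (n (Fin.last ν) + 1), z i * (2 ^ K) ^ i
        = ∑ j, z (n j) * (2 ^ K) ^ (n j) := by
    intro z hz
    rw [← Finset.sum_image (s := Finset.univ) (g := n) (f := fun i => z i * (2 ^ K) ^ i)
      (fun a _ b _ h => hmono.injective h)]
    symm
    apply Finset.sum_subset
    · intro i hi
      obtain ⟨j, -, rfl⟩ := Finset.mem_image.1 hi
      have := hmono.monotone (Fin.le_last j)
      exact Finset.mem_range.2 (by omega)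
    · intro i _ hi
      rw [hz i, zero_mul]
      rintro ⟨j, rfl⟩
      exact hi (Finset.mem_image_of_mem _ (Finset.mem_univ j))
  constructor
  · rintro ⟨z, hz, rfl⟩
    refine ⟨fun j => z (n j), fun j => ?_, hsum z fun i hi => ?_⟩
    · have := hz (n j)
      rwa [if_pos ⟨j, rfl⟩] at this
    · have := hz i
      rw [if_neg hi] at this
      omega
  · rintro ⟨z, hz, rfl⟩
    let w : ℕ → ℕ := fun i => if h : ∃ j, n j = i then z h.choose else 0
    have hw : ∀ j, w (n j) = z j := by
      intro j
      have h : ∃ j', n j' = n j := ⟨j, rfl⟩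
      simp only [w, dif_pos h]
      rw [hmono.injective h.choose_spec]
    refine ⟨w, fun i => ?_, ?_⟩
    · by_cases h : ∃ j, n j = i
      · simp only [w, dif_pos h, if_pos h]
        exact hz _
      · simp only [w, dif_neg h, if_neg h]
        norm_num
    · rw [hsum w fun i hi => by simp only [w, dif_neg hi]]
      simp only [hw]
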